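/- arXiv:math/0205091 — 3 statements merged into one kernel-verified Lean document; each statement's English description precedes it below -/
import Mathlib

section
/- Let n ≥ 5, j ∈ ZMod n, and 0 ≤ k ≤ n−3. The finset of chords P(j,k) := {{j+1, j+1+t} : k+2 ≤ t ≤ n−2} ∪ {{j+2, j+2+t} : 2 ≤ t ≤ k+1} in ZMod n consists of valid chords (each pair has distinct, non-adjacent endpoints), is pairwise non-crossing, and has cardinality exactly n − 3. (Hence every vertex of the paper's path C in the pants graph of the n-punctured sphere is a genuine pants decomposition with 3·0−3+n = n−3 curves.) -/
/-!
Write the gaps as `j + 1 + m` with `0 ≤ m < n` (`gapPt`). In this coordinate every chord of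
`P n j k` is either `{0, y}` with `k + 2 ≤ y ≤ n - 2` or `{1, y}` with `3 ≤ y ≤ k + 2`
(`mem_P`). Two chords of the same kind share an endpoint, and for chords `{0, y}` and `{1, y'}`
one has `1 < y' ≤ k + 2 ≤ y`, so they are nested or share an endpoint; hence nothing crosses.
The two fans are disjoint and have `n - 3 - k` and `k` members.
The counterclockwise distance between two gaps is an explicit function of the coordinates
(`gapPt_sub_val`), which reduces the claims about chords and crossings to linear arithmetic.
-/

/-- `c` lies strictly between `a` and `b` (going counterclockwise from `a` to `b`)
on the circle of gaps `ZMod n`. -/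
def GapBtw (n : ℕ) (a b c : ZMod n) : Prop :=
  0 < (c - a).val ∧ (c - a).val < (b - a).val

/-- The ordered pair `(a, b)` spans a chord: the gaps `a` and `b` are distinct and
non-adjacent, i.e. `(b - a).val ∉ {0, 1, n - 1}`. -/
def IsChordPair (n : ℕ) (a b : ZMod n) : Prop :=
  (b - a).val ∉ ({0, 1, n - 1} : Set ℕ)

/-- The unordered pair `s` is a chord of `ZMod n`: it is of the form `{a, b}` with
`a`, `b` distinct non-adjacent gaps. -/
def IsChord (n : ℕ) (s : Finset (ZMod n)) : Prop :=
  ∃ a b : ZMod n, s = {a, b} ∧ IsChordPair n a b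

/-- The ordered chords `(a,b)` and `(c,d)` cross: they share no endpoint and exactly
one of `c`, `d` lies strictly between `a` and `b`. -/
def CrossOrd (n : ℕ) (a b c d : ZMod n) : Prop :=
  a ≠ c ∧ a ≠ d ∧ b ≠ c ∧ b ≠ d ∧ Xor' (GapBtw n a b c) (GapBtw n a b d)

/-- The unordered chords `s` and `t` cross. -/
def Crosses (n : ℕ) (s t : Finset (ZMod n)) : Prop :=
  ∃ a b c d : ZMod n, s = {a, b} ∧ t = {c, d} ∧ CrossOrd n a b c d

/-- The pants decomposition `P(j,k)`, the vertex `P_{j(n-3)+k}` of the paper's closed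
path `C` in the pants graph of the `n`-punctured sphere:
`P(j,k) = {{j+1, j+1+t} : k+2 ≤ t ≤ n-2} ∪ {{j+2, j+2+t} : 2 ≤ t ≤ k+1}`. -/
def P (n : ℕ) (j : ZMod n) (k : ℕ) : Finset (Finset (ZMod n)) :=
  ((Finset.Icc (k + 2) (n - 2)).image fun t : ℕ => ({j + 1, j + 1 + (t : ZMod n)} : Finset (ZMod n)))
    ∪ ((Finset.Icc 2 (k + 1)).image fun t : ℕ => ({j + 2, j + 2 + (t : ZMod n)} : Finset (ZMod n)))

/-- The gap with coordinate `m`, counted counterclockwise from the gap `j + 1`. -/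
def gapPt (n : ℕ) (j : ZMod n) (m : ℕ) : ZMod n := j + 1 + (m : ZMod n)

lemma gapPt_sub_val {n : ℕ} (j : ZMod n) {x y : ℕ} (hx : x < n) (hy : y < n) :
    (gapPt n j y - gapPt n j x).val = if x ≤ y then y - x else n + y - x := by
  have hcast : gapPt n j y - gapPt n j x =
      (((if x ≤ y then y - x else n + y - x : ℕ)) : ZMod n) := by
    unfold gapPt
    split_ifs with h
    · rw [Nat.cast_sub h]; ring
    · rw [Nat.cast_sub (by omega), Nat.cast_add, ZMod.natCast_self]; ring
  rw [hcast, ZMod.val_cast_of_lt]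
  split_ifs <;> omega

lemma gapPt_inj {n : ℕ} (j : ZMod n) {x y : ℕ} (hx : x < n) (hy : y < n) :
    gapPt n j x = gapPt n j y ↔ x = y := by
  refine ⟨fun h => ?_, fun h => h ▸ rfl⟩
  have hval := gapPt_sub_val j hx hy
  rw [h, sub_self, ZMod.val_zero] at hval
  split_ifs at hval <;> omega

/-- Both fans of `P n j k` in the coordinate `gapPt`. The chord `{j + 2, j + 2 + t}` has
coordinates `1` and `t + 1`. -/
lemma mem_P {n : ℕ} {j : ZMod n} {k : ℕ} {s : Finset (ZMod n)} (hs : s ∈ P n j k) :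
    ∃ x y : ℕ, s = {gapPt n j x, gapPt n j y} ∧
      (x = 0 ∧ k + 2 ≤ y ∧ y ≤ n - 2 ∨ x = 1 ∧ 3 ≤ y ∧ y ≤ k + 2) := by
  simp only [P, Finset.mem_union, Finset.mem_image, Finset.mem_Icc] at hs
  rcases hs with ⟨t, ht, rfl⟩ | ⟨t, ht, rfl⟩
  · exact ⟨0, t, by simp [gapPt], by omega⟩
  · refine ⟨1, t + 1, ?_, by omega⟩
    congr 1
    · simp only [gapPt]; push_cast; ring
    · congr 1; simp only [gapPt]; push_cast; ring

/-- Chords with a common first endpoint, or nested in coordinates, do not cross, whichever of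
the two comes first. Since `Crosses` quantifies over all ways of ordering the endpoints, the four
orientations are checked separately. -/
lemma not_crosses_of_nested {n : ℕ} (j : ZMod n) {a b c d : ℕ}
    (hb : b < n) (hab : a < b) (hac : a ≤ c) (hcd : c < d) (hdn : d < n)
    (h : a = c ∨ d ≤ b) :
    ¬ Crosses n {gapPt n j a, gapPt n j b} {gapPt n j c, gapPt n j d} ∧
    ¬ Crosses n {gapPt n j c, gapPt n j d} {gapPt n j a, gapPt n j b} := by
  have ha : a < n := by omega
  have hc : c < n := by omega
  constructor <;>
  · rintro ⟨a', b', c', d', h₁, h₂, hcross⟩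
    simp only [← Finset.coe_inj, Finset.coe_pair, Set.pair_eq_pair_iff] at h₁ h₂
    rcases h₁ with ⟨rfl, rfl⟩ | ⟨rfl, rfl⟩ <;> rcases h₂ with ⟨rfl, rfl⟩ | ⟨rfl, rfl⟩ <;>
    · simp only [CrossOrd, GapBtw, Xor', Xor, ne_eq, gapPt_inj, gapPt_sub_val, ha, hb, hc, hdn]
        at hcross
      split_ifs at hcross <;> omega

lemma gapPt_pair_injOn {n : ℕ} (j : ZMod n) {x : ℕ} (hx : x < n) :
    Set.InjOn (fun t : ℕ => ({gapPt n j x, gapPt n j t} : Finset (ZMod n))) {t | t < n} := by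
  intro t ht u hu h
  replace ht : t < n := ht
  replace hu : u < n := hu
  simp only [← Finset.coe_inj, Finset.coe_pair, Set.pair_eq_pair_iff, gapPt_inj, hx, ht, hu]
    at h
  omega

lemma card_P {n : ℕ} (hn : 5 ≤ n) (j : ZMod n) {k : ℕ} (hk : k ≤ n - 3) :
    (P n j k).card = n - 3 := by
  have hfan₁ : (fun t : ℕ => ({j + 1, j + 1 + (t : ZMod n)} : Finset (ZMod n))) =
      fun t => {gapPt n j 0, gapPt n j t} := by
    funext t; simp [gapPt]
  have hfan₂ : (fun t : ℕ => ({j + 2, j + 2 + (t : ZMod n)} : Finset (ZMod n))) =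
      fun t => {gapPt n j 1, gapPt n j (t + 1)} := by
    funext t
    have e₁ : j + 2 = gapPt n j 1 := by simp only [gapPt]; push_cast; ring
    have e₂ : j + 2 + (t : ZMod n) = gapPt n j (t + 1) := by
      simp only [gapPt]; push_cast; ring
    rw [e₂, e₁]
  rw [P, hfan₁, hfan₂, Finset.card_union_of_disjoint, Finset.card_image_of_injOn,
    Finset.card_image_of_injOn, Nat.card_Icc, Nat.card_Icc]
  · omega
  · intro t ht u hu h
    simp only [Finset.coe_Icc, Set.mem_Icc] at ht hu
    have := gapPt_pair_injOn j (x := 1) (by omega) (show t + 1 < n by omega)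
      (show u + 1 < n by omega) h
    omega
  · refine (gapPt_pair_injOn j (by omega)).mono fun t ht => ?_
    simp only [Finset.coe_Icc, Set.mem_Icc] at ht
    exact show t < n by omega
  · -- The gap with coordinate `0` lies on every chord of the first fan and none of the second.
    rw [Finset.disjoint_left]
    intro s hs₁ hs₂
    simp only [Finset.mem_image, Finset.mem_Icc] at hs₁ hs₂
    obtain ⟨t, ht, rfl⟩ := hs₁
    obtain ⟨u, hu, h⟩ := hs₂
    have hmem : gapPt n j 0 ∈ ({gapPt n j 1, gapPt n j (u + 1)} : Finset (ZMod n)) := by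
      rw [h]; simp
    rw [Finset.mem_insert, Finset.mem_singleton, gapPt_inj j (by omega) (by omega),
      gapPt_inj j (by omega) (by omega)] at hmem
    omega

/-- Each `P(j,k)` (for `n ≥ 5`, `k ≤ n - 3`) consists of valid chords, is pairwise
non-crossing, and has cardinality exactly `n - 3`. -/
theorem P_isPantsDecomposition (n : ℕ) (hn : 5 ≤ n) (j : ZMod n) (k : ℕ) (hk : k ≤ n - 3) :
    (∀ s ∈ P n j k, IsChord n s) ∧
    (∀ s ∈ P n j k, ∀ t ∈ P n j k, ¬ Crosses n s t) ∧
    (P n j k).card = n - 3 := by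
  refine ⟨fun s hs => ?_, fun s hs t ht => ?_, card_P hn j hk⟩
  · obtain ⟨x, y, rfl, h⟩ := mem_P hs
    refine ⟨_, _, rfl, ?_⟩
    rw [IsChordPair, gapPt_sub_val j (by omega) (by omega), if_pos (by omega)]
    simp only [Set.mem_insert_iff, Set.mem_singleton_iff]
    omega
  · obtain ⟨x, y, rfl, h⟩ := mem_P hs
    obtain ⟨z, w, rfl, h'⟩ := mem_P ht
    rcases le_total x z with hxz | hxz
    · exact (not_crosses_of_nested j (by omega) (by omega) hxz (by omega) (by omega)
        (by omega)).1
    · exact (not_crosses_of_nested j (by omega) (by omega) hxz (by omega) (by omega)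
        (by omega)).2
end

section
/- Let n ≥ 5, j ∈ ZMod n, and 0 ≤ k ≤ n−4. Then P(j,k+1) = (P(j,k) \ {{j+1, j+k+3}}) ∪ {{j+2, j+k+4}}, where the chord {j+1, j+k+3} belongs to P(j,k), the chord {j+2, j+k+4} does not belong to P(j,k), and the removed chord {j+1, j+k+3} crosses the added chord {j+2, j+k+4}. In particular, consecutive pants decompositions along the paper's path C differ by replacing exactly one curve by a curve crossing it (an A-move in the pants graph). -/
theorem natCast_inj_of_lt {n s t : ℕ} (hs : s < n) (ht : t < n)
    (h : (s : ZMod n) = (t : ZMod n)) : s = t := by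
  rw [← ZMod.val_natCast_of_lt hs, h, ZMod.val_natCast_of_lt ht]

theorem pair_add_natCast_inj {n : ℕ} {a : ZMod n} {s t : ℕ} (hs0 : 0 < s) (hs : s < n)
    (ht : t < n) (h : ({a, a + (s : ZMod n)} : Finset (ZMod n)) = {a, a + (t : ZMod n)}) :
    s = t := by
  have hmem : a + (s : ZMod n) ∈ ({a, a + (t : ZMod n)} : Finset (ZMod n)) := by
    rw [← h]; simp
  rw [Finset.mem_insert, Finset.mem_singleton] at hmem
  rcases hmem with h' | h'
  · have : s = 0 := natCast_inj_of_lt hs (by omega) (by simpa using h')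
    omega
  · exact natCast_inj_of_lt hs ht (add_left_cancel h')

/-- The endpoint `j + 1` is missing from `{j + 2, j + 2 + t}`, since that would force
`t + 1 = 0` or `1 = 0` modulo `n`. -/
theorem fan_one_ne_fan_two {n : ℕ} (j x : ZMod n) {t : ℕ} (ht : 0 < t ∧ t + 1 < n) :
    ({j + 1, x} : Finset (ZMod n)) ≠ {j + 2, j + 2 + (t : ZMod n)} := by
  intro h
  have hmem : j + 1 ∈ ({j + 2, j + 2 + (t : ZMod n)} : Finset (ZMod n)) := by
    rw [← h]; simp
  rw [Finset.mem_insert, Finset.mem_singleton] at hmem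
  rcases hmem with h' | h'
  · have : 1 = 0 := natCast_inj_of_lt (n := n) (by omega) (by omega)
      (by push_cast; linear_combination -h')
    omega
  · have : t + 1 = 0 := natCast_inj_of_lt (n := n) (by omega) (by omega)
      (by push_cast; linear_combination -h')
    omega

theorem mem_P_iff {n : ℕ} {j : ZMod n} {k : ℕ} {s : Finset (ZMod n)} :
    s ∈ P n j k ↔
      (∃ t : ℕ, k + 2 ≤ t ∧ t ≤ n - 2 ∧ s = {j + 1, j + 1 + (t : ZMod n)}) ∨
      (∃ t : ℕ, 2 ≤ t ∧ t ≤ k + 1 ∧ s = {j + 2, j + 2 + (t : ZMod n)}) := by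
  simp only [P, Finset.mem_union, Finset.mem_image, Finset.mem_Icc, and_assoc, eq_comm (b := s)]

/-- Consecutive pants decompositions along the path `C` differ by replacing the single
chord `{j+1, j+k+3}` by the chord `{j+2, j+k+4}`, which crosses it (an A-move). -/
theorem P_succ_is_Amove (n : ℕ) (hn : 5 ≤ n) (j : ZMod n) (k : ℕ) (hk : k ≤ n - 4) :
    P n j (k + 1) =
      (P n j k \ {({j + 1, j + (k : ZMod n) + 3} : Finset (ZMod n))}) ∪
        {({j + 2, j + (k : ZMod n) + 4} : Finset (ZMod n))} ∧
    ({j + 1, j + (k : ZMod n) + 3} : Finset (ZMod n)) ∈ P n j k ∧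
    ({j + 2, j + (k : ZMod n) + 4} : Finset (ZMod n)) ∉ P n j k ∧
    Crosses n {j + 1, j + (k : ZMod n) + 3} {j + 2, j + (k : ZMod n) + 4} := by
  have hb : j + (k : ZMod n) + 3 = j + 1 + ((k + 2 : ℕ) : ZMod n) := by push_cast; ring
  have hd : j + (k : ZMod n) + 4 = j + 2 + ((k + 2 : ℕ) : ZMod n) := by push_cast; ring
  rw [hb, hd]
  refine ⟨?_, ?_, ?_, ?_⟩
  · ext s
    simp only [mem_P_iff, Finset.mem_union, Finset.mem_sdiff, Finset.mem_singleton]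
    constructor
    · rintro (⟨t, h1, h2, rfl⟩ | ⟨t, h1, h2, rfl⟩)
      · refine Or.inl ⟨Or.inl ⟨t, by omega, h2, rfl⟩, fun h => ?_⟩
        have := pair_add_natCast_inj (by omega) (by omega) (by omega) h
        omega
      · rcases Nat.lt_or_ge t (k + 2) with h | h
        · exact Or.inl ⟨Or.inr ⟨t, h1, by omega, rfl⟩,
            (fan_one_ne_fan_two j _ (by omega)).symm⟩
        · obtain rfl : t = k + 2 := by omega
          exact Or.inr rfl
    · rintro (⟨⟨t, h1, h2, rfl⟩ | ⟨t, h1, h2, rfl⟩, hne⟩ | rfl)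
      · have : t ≠ k + 2 := by rintro rfl; exact hne rfl
        exact Or.inl ⟨t, by omega, h2, rfl⟩
      · exact Or.inr ⟨t, h1, by omega, rfl⟩
      · exact Or.inr ⟨k + 2, by omega, by omega, rfl⟩
  · exact mem_P_iff.2 (Or.inl ⟨k + 2, le_rfl, by omega, rfl⟩)
  · rw [mem_P_iff]
    rintro (⟨t, -, -, h⟩ | ⟨t, h1, h2, h⟩)
    · exact fan_one_ne_fan_two j _ (by omega) h.symm
    · have := pair_add_natCast_inj (by omega) (by omega) (by omega) h
      omega
  · -- Measured from `j + 1`, the gaps `j + 2`, `j + k + 3`, `j + k + 4` sit at positions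
    -- `1 < k + 2 < k + 3 < n`, so exactly the first lies inside the arc of the removed chord.
    have hc' : (j + 2 : ZMod n) = j + 1 + ((1 : ℕ) : ZMod n) := by push_cast; ring
    have hd' : j + 2 + ((k + 2 : ℕ) : ZMod n) = j + 1 + ((k + 3 : ℕ) : ZMod n) := by
      push_cast; ring
    have ha' : (j + 1 : ZMod n) = j + 1 + ((0 : ℕ) : ZMod n) := by simp
    have ne : ∀ {s t : ℕ}, s < n → t < n → s ≠ t →
        j + 1 + (s : ZMod n) ≠ j + 1 + (t : ZMod n) :=
      fun hs ht hst h => hst (natCast_inj_of_lt hs ht (add_left_cancel h))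
    have val : ∀ {t : ℕ}, t < n → (j + 1 + (t : ZMod n) - (j + 1)).val = t := fun ht => by
      rw [add_sub_cancel_left, ZMod.val_natCast_of_lt ht]
    refine ⟨_, _, _, _, rfl, rfl, ?_⟩
    rw [hd', hc']
    refine ⟨?_, ?_, ne (by omega) (by omega) (by omega), ne (by omega) (by omega) (by omega), ?_⟩
    · conv_lhs => rw [ha']
      exact ne (by omega) (by omega) (by omega)
    · conv_lhs => rw [ha']
      exact ne (by omega) (by omega) (by omega)
    · unfold GapBtw
      rw [val (by omega), val (by omega), val (by omega)]
      exact Or.inl ⟨by omega, by omega⟩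
end

section
/- Let n ≥ 5 and let {a,b} and {c,d} be chords of ZMod n sharing no endpoint. Then {a,b} and {c,d} cross if and only if all four of the puncture sets D(a,b) ∩ D(c,d), D(a,b) \ D(c,d), D(c,d) \ D(a,b), and (D(a,b) ∪ D(c,d))ᶜ are nonempty; equivalently, the chords do not cross if and only if the puncture sets they cut off are nested or disjoint (after possibly replacing one by its complement). This identifies the combinatorial crossing relation with the separation pattern of punctures by the curves β_{a,b} and β_{c,d} on the n-punctured sphere. -/
/-- The set of punctures cut off on one side of the chord `{i, j}` (puncture `p` lies
between gap `p` and gap `p+1`): `D(i,j) = {p : (p - i).val < (j - i).val}`. -/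
def D (n : ℕ) (i j : ZMod n) : Set (ZMod n) :=
  {p : ZMod n | (p - i).val < (j - i).val}

/-- The representative of `x - y` in `[0, n)`, as a case distinction suitable for linear
arithmetic. -/
lemma val_sub_cases {n : ℕ} [NeZero n] (x y : ZMod n) :
    (x - y).val < n ∧ x.val < n ∧ y.val < n ∧
    ((y.val ≤ x.val ∧ (x - y).val + y.val = x.val) ∨
      (x.val < y.val ∧ (x - y).val + y.val = x.val + n)) := by
  have h1 := ZMod.val_lt (x - y)
  have h2 := ZMod.val_lt x
  have h3 := ZMod.val_lt y
  have h := ZMod.val_add (x - y) y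
  rw [sub_add_cancel] at h
  refine ⟨h1, h2, h3, ?_⟩
  rcases lt_or_ge ((x - y).val + y.val) n with hlt | hge
  · rw [Nat.mod_eq_of_lt hlt] at h
    omega
  · rw [Nat.mod_eq_sub_mod hge, Nat.mod_eq_of_lt (by omega)] at h
    omega

lemma val_ne {n : ℕ} [NeZero n] {x y : ZMod n} (h : x ≠ y) : x.val ≠ y.val :=
  fun e => h (ZMod.val_injective n e)

lemma ne_of_isChordPair {n : ℕ} {a b : ZMod n} (h : IsChordPair n a b) : a ≠ b := by
  rintro rfl
  simp [IsChordPair] at h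

lemma crossOrd_swap_right {n : ℕ} {a b c d : ZMod n} (h : CrossOrd n a b c d) :
    CrossOrd n a b d c := by
  obtain ⟨h1, h2, h3, h4, h5⟩ := h
  exact ⟨h2, h1, h4, h3, h5.symm⟩

/-- Reversing `(a, b)` exchanges the two open arcs, so each of `c`, `d` changes its membership
and the exclusive disjunction is unaffected. -/
lemma crossOrd_swap_left {n : ℕ} [NeZero n] {a b c d : ZMod n} (hab : a ≠ b)
    (h : CrossOrd n a b c d) : CrossOrd n b a c d := by
  obtain ⟨h1, h2, h3, h4, h5⟩ := h
  refine ⟨h3, h4, h1, h2, ?_⟩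
  have key : ∀ x, a ≠ x → b ≠ x → (GapBtw n b a x ↔ ¬ GapBtw n a b x) := by
    intro x hax hbx
    have := val_ne hab
    have := val_ne hax
    have := val_ne hbx
    have := val_sub_cases x a
    have := val_sub_cases x b
    have := val_sub_cases a b
    have := val_sub_cases b a
    unfold GapBtw
    omega
  rw [key c h1 h3, key d h2 h4]
  exact xor_not_not.mpr h5

lemma pair_eq_cases {α : Type*} [DecidableEq α] {a b x y : α}
    (h : ({a, b} : Finset α) = {x, y}) : (a = x ∧ b = y) ∨ (a = y ∧ b = x) := by
  have h' : ({a, b} : Set α) = {x, y} := by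
    have := congrArg (fun s : Finset α => (s : Set α)) h
    simpa using this
  exact Set.pair_eq_pair_iff.mp h'

/-- Crossing of unordered chords may be tested on any ordering of the endpoints. -/
lemma crosses_iff_crossOrd {n : ℕ} [NeZero n] {a b c d : ZMod n} (hab : a ≠ b) :
    Crosses n {a, b} {c, d} ↔ CrossOrd n a b c d := by
  constructor
  · rintro ⟨a', b', c', d', hs, ht, h⟩
    rcases pair_eq_cases hs with ⟨rfl, rfl⟩ | ⟨rfl, rfl⟩ <;>
      rcases pair_eq_cases ht with ⟨rfl, rfl⟩ | ⟨rfl, rfl⟩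
    · exact h
    · exact crossOrd_swap_right h
    · exact crossOrd_swap_left hab.symm h
    · exact crossOrd_swap_right (crossOrd_swap_left hab.symm h)
  · exact fun h => ⟨a, b, c, d, rfl, rfl, h⟩

lemma regions_nonempty_of_crossOrd {n : ℕ} [NeZero n] {a b c d : ZMod n}
    (hab : a ≠ b) (hcd : c ≠ d) (h : CrossOrd n a b c d) :
    (D n a b ∩ D n c d).Nonempty ∧ (D n a b \ D n c d).Nonempty ∧
      (D n c d \ D n a b).Nonempty ∧ ((D n a b ∪ D n c d)ᶜ).Nonempty := by
  obtain ⟨hac, had, hbc, hbd, h⟩ := h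
  have := val_ne hab
  have := val_ne hcd
  have := val_ne hac
  have := val_ne had
  have := val_ne hbc
  have := val_ne hbd
  have := val_sub_cases b a
  have := val_sub_cases d c
  have := val_sub_cases c a
  have := val_sub_cases d a
  have := val_sub_cases a c
  have := val_sub_cases b c
  have haa : (a - a).val = 0 := by simp
  have hcc : (c - c).val = 0 := by simp
  unfold GapBtw at h
  rcases h with h | h
  -- cyclic order `a, c, b, d`
  · refine ⟨⟨c, ?_⟩, ⟨a, ?_⟩, ⟨b, ?_⟩, ⟨d, ?_⟩⟩ <;>
      simp only [D, Set.mem_inter_iff, Set.mem_sdiff, Set.mem_compl_iff, Set.mem_union,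
        Set.mem_ofPred_eq] <;> omega
  -- cyclic order `a, d, b, c`
  · refine ⟨⟨a, ?_⟩, ⟨d, ?_⟩, ⟨c, ?_⟩, ⟨b, ?_⟩⟩ <;>
      simp only [D, Set.mem_inter_iff, Set.mem_sdiff, Set.mem_compl_iff, Set.mem_union,
        Set.mem_ofPred_eq] <;> omega

lemma nested_of_not_crossOrd {n : ℕ} [NeZero n] {a b c d : ZMod n}
    (hab : a ≠ b) (hcd : c ≠ d) (hac : a ≠ c) (had : a ≠ d) (hbc : b ≠ c) (hbd : b ≠ d)
    (h : ¬ CrossOrd n a b c d) :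
    D n a b ∩ D n c d = ∅ ∨ D n a b ⊆ D n c d ∨ D n c d ⊆ D n a b ∨
      D n a b ∪ D n c d = Set.univ := by
  have h' : GapBtw n a b c ↔ GapBtw n a b d :=
    (not_xor _ _).mp fun hx => h ⟨hac, had, hbc, hbd, hx⟩
  have := val_ne hab
  have := val_ne hcd
  have := val_ne hac
  have := val_ne had
  have := val_ne hbc
  have := val_ne hbd
  have := val_sub_cases b a
  have := val_sub_cases d c
  have := val_sub_cases c a
  have := val_sub_cases d a
  unfold GapBtw at h'
  by_cases hc : (c - a).val < (b - a).val <;> by_cases ho : (c - a).val < (d - a).val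
  -- cyclic order `a, c, d, b`
  · refine Or.inr (Or.inr (Or.inl fun p hp => ?_))
    have := val_sub_cases p a
    have := val_sub_cases p c
    simp only [D, Set.mem_ofPred_eq] at hp ⊢
    omega
  -- cyclic order `a, d, c, b`
  · refine Or.inr (Or.inr (Or.inr (Set.eq_univ_of_forall fun p => ?_)))
    have := val_sub_cases p a
    have := val_sub_cases p c
    simp only [D, Set.mem_union, Set.mem_ofPred_eq]
    omega
  -- cyclic order `a, b, c, d`
  · refine Or.inl (Set.eq_empty_of_forall_notMem fun p hp => ?_)
    have := val_sub_cases p a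
    have := val_sub_cases p c
    simp only [D, Set.mem_inter_iff, Set.mem_ofPred_eq] at hp
    omega
  -- cyclic order `a, b, d, c`
  · refine Or.inr (Or.inl fun p hp => ?_)
    have := val_sub_cases p a
    have := val_sub_cases p c
    simp only [D, Set.mem_ofPred_eq] at hp ⊢
    omega

/-- Two chords sharing no endpoint cross iff all four puncture regions
`D(a,b) ∩ D(c,d)`, `D(a,b) \ D(c,d)`, `D(c,d) \ D(a,b)` and `(D(a,b) ∪ D(c,d))ᶜ`
are nonempty; equivalently, they do not cross iff the puncture sets they cut off are
nested or disjoint (after possibly replacing one by its complement). -/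
theorem crossing_iff_regions (n : ℕ) (hn : 5 ≤ n) (a b c d : ZMod n)
    (hab : IsChordPair n a b) (hcd : IsChordPair n c d)
    (hac : a ≠ c) (had : a ≠ d) (hbc : b ≠ c) (hbd : b ≠ d) :
    (Crosses n {a, b} {c, d} ↔
      (D n a b ∩ D n c d).Nonempty ∧ (D n a b \ D n c d).Nonempty ∧
      (D n c d \ D n a b).Nonempty ∧ ((D n a b ∪ D n c d)ᶜ).Nonempty) ∧
    (¬ Crosses n {a, b} {c, d} ↔
      (D n a b ∩ D n c d = ∅ ∨ D n a b ⊆ D n c d ∨ D n c d ⊆ D n a b ∨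
        D n a b ∪ D n c d = Set.univ)) := by
  have : NeZero n := ⟨by omega⟩
  have hab' := ne_of_isChordPair hab
  have hcd' := ne_of_isChordPair hcd
  rw [crosses_iff_crossOrd hab']
  have h1 := regions_nonempty_of_crossOrd (c := c) (d := d) hab' hcd'
  have h2 := nested_of_not_crossOrd hab' hcd' hac had hbc hbd
  -- the four nested-or-disjoint alternatives say that one of the four regions is empty
  have h3 : (D n a b ∩ D n c d = ∅ ∨ D n a b ⊆ D n c d ∨ D n c d ⊆ D n a b ∨
        D n a b ∪ D n c d = Set.univ) ↔
      ¬ ((D n a b ∩ D n c d).Nonempty ∧ (D n a b \ D n c d).Nonempty ∧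
      (D n c d \ D n a b).Nonempty ∧ ((D n a b ∪ D n c d)ᶜ).Nonempty) := by
    simp only [not_and_or, Set.not_nonempty_iff_eq_empty, Set.sdiff_eq_empty, Set.compl_empty_iff]
  rw [h3] at h2 ⊢
  have h : CrossOrd n a b c d ↔ _ := ⟨h1, fun hr => by_contra fun hx => h2 hx hr⟩
  exact ⟨h, not_congr h⟩
end
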